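/- Let d be the minimum weight of the dual code of the p-ary code of points and k-spaces of the hyperbolic quadric Q^+(2n+1,q), q = p^h. Then d >= 1 + (q^n - 1)(q^{n-1} + 1)/(q^k - 1). -/

import Mathlib

/-!
Let `M` and `N` be the numbers of `k`-spaces of the quadric through a point and through a line of
the quadric. If `P₀` is in the support of a dual codeword `c`, each of the `M` `k`-spaces through
`P₀` contains another support point, since the values of `c` on it sum to zero. A second point lies
on at most `N` of these `k`-spaces, so `M ≤ (|supp c| - 1) N`. It remains to see that `N` is a
positive constant and that `M (q^k - 1) = N (q^n - 1) (q^(n-1) + 1)` (`card_above_point`).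

Neither closed formulas for `M` and `N` nor Witt's theorem are needed. For a totally singular `W`
the form is a nonconstant affine function on each coset of `W` outside `W^⊥`, so exactly one in `q`
of the vectors outside `W^⊥` is singular (`card_singular_not_mem_perp`). Hence the number of
singular vectors in `W^⊥` depends only on `dim W` (`card_singular_perp`). Double counting pairs
`(v, U)` with `v ∈ U ∖ W` (`sum_above`) then shows, by induction on the codimension, that the number
of totally singular `j`-spaces containing `W` depends only on `dim W` (`exists_card_above`). For `W`
a point the same double count relates `M` to `N`; the number of singular vectors of the whole space,
which enters there, is read off from a maximal totally singular `W`, for which `W^⊥ = W`.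
-/

open scoped Classical

noncomputable section

variable (F : Type*) [Field F] [Fintype F]

/-- The standard hyperbolic quadratic form `x₀x₁ + x₂x₃ + ⋯` on `F^{2n+2}`,
defining `Q⁺(2n+1,q)`. -/
def QhypForm (n : ℕ) : (Fin (2 * n + 2) → F) → F := fun v =>
  ∑ i : Fin (n + 1),
    v ⟨2 * i.1, by have := i.2; omega⟩ * v ⟨2 * i.1 + 1, by have := i.2; omega⟩

/-- Points of the hyperbolic quadric `Q⁺(2n+1,q)`. -/
def QhypPoint (n : ℕ) := {W : Submodule F (Fin (2 * n + 2) → F) //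
  Module.finrank F W = 1 ∧ ∀ v ∈ W, QhypForm F n v = 0}

/-- The `k`-dimensional projective subspaces contained in `Q⁺(2n+1,q)`:
totally singular subspaces of vector dimension `k+1`. -/
def QhypSub (n k : ℕ) := {W : Submodule F (Fin (2 * n + 2) → F) //
  Module.finrank F W = k + 1 ∧ ∀ v ∈ W, QhypForm F n v = 0}

/-! ### Counting totally singular subspaces of a nondegenerate quadratic form -/

section Counting

set_option linter.unusedSectionVars false

open Finset QuadraticMap

variable {K V : Type*} [Field K] [Fintype K] [AddCommGroup V] [Module K V] [Fintype V]
  (Q : QuadraticForm K V)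

/-- Totally singular subspaces of the quadratic form `Q`. -/
def TotSing (W : Submodule K V) : Prop := ∀ v ∈ W, Q v = 0

/-- The orthogonal of `W` for the polar form of `Q`, written `W^⊥` below. -/
def perp (W : Submodule K V) : Submodule K V := LinearMap.BilinForm.orthogonal (polarBilin Q) W

variable {Q}

lemma mem_perp {W : Submodule K V} {v : V} : v ∈ perp Q W ↔ ∀ w ∈ W, polar Q w v = 0 :=
  LinearMap.BilinForm.mem_orthogonal_iff

lemma map_add_polar (v w : V) : Q (v + w) = Q v + Q w + polar Q v w := by
  simp [polar]

lemma TotSing.le_perp {W : Submodule K V} (hW : TotSing Q W) : W ≤ perp Q W := by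
  intro v hv
  rw [mem_perp]
  intro w hw
  simp [polar, hW v hv, hW w hw, hW _ (W.add_mem hw hv)]

lemma TotSing.sup_span {W : Submodule K V} (hW : TotSing Q W) {v : V} (hv : v ∈ perp Q W)
    (hv0 : Q v = 0) : TotSing Q (W ⊔ K ∙ v) := by
  intro x hx
  obtain ⟨w, hw, y, hy, rfl⟩ := Submodule.mem_sup.1 hx
  obtain ⟨a, rfl⟩ := Submodule.mem_span_singleton.1 hy
  rw [map_add_polar, hW w hw, QuadraticMap.map_smul, hv0, polar_smul_right, mem_perp.1 hv w hw]
  simp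

lemma card_polar_fiber_le {W : Submodule K V} {v : V} (hv : v ∉ perp Q W) (a c : K) :
    #{w : V | w ∈ W ∧ polar Q w v = a} ≤ #{w : V | w ∈ W ∧ polar Q w v = c} := by
  rw [mem_perp] at hv
  push Not at hv
  obtain ⟨w₀, hw₀, hb⟩ := hv
  refine card_le_card_of_injOn (· + ((c - a) / polar Q w₀ v) • w₀) ?_ ?_
  · intro w hw
    simp only [coe_filter, mem_univ, true_and, Set.mem_ofPred_eq] at hw ⊢
    refine ⟨W.add_mem hw.1 (W.smul_mem _ hw₀), ?_⟩
    rw [polar_add_left, polar_smul_left, hw.2, smul_eq_mul]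
    field_simp
    ring
  · intro x _ y _ h
    simpa using h

/-- A vector outside `W^⊥` induces a nonzero linear functional on `W`, so it takes every value
equally often. -/
lemma card_polar_fiber {W : Submodule K V} {v : V} (hv : v ∉ perp Q W) (a : K) :
    Fintype.card K * #{w : V | w ∈ W ∧ polar Q w v = a} = #{w : V | w ∈ W} := by
  rw [card_eq_sum_card_fiberwise (s := ({w : V | w ∈ W} : Finset V)) (f := fun w => polar Q w v)
    (t := univ) (by simp)]
  rw [sum_congr rfl (g := fun _ => #{w : V | w ∈ W ∧ polar Q w v = a})]
  · simp
  · intro c _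
    rw [filter_filter]
    exact le_antisymm (card_polar_fiber_le hv _ _) (card_polar_fiber_le hv _ _)

/-- Off `W^⊥`, exactly one vector in `q` is singular: on a coset `v + W` with `v ∉ W^⊥` the form
is a nonconstant affine function. -/
lemma card_singular_not_mem_perp {W : Submodule K V} (hW : TotSing Q W) :
    Fintype.card K * #{v : V | v ∉ perp Q W ∧ Q v = 0} = #{v : V | v ∉ perp Q W} := by
  have hpos : 0 < #{w : V | w ∈ W} := card_pos.2 ⟨0, by simp⟩
  apply Nat.eq_of_mul_eq_mul_left hpos
  -- Count the pairs `(w, v)` with `w ∈ W`, `v ∉ W^⊥` and `v + w` singular in two ways.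
  have key := sum_card_bipartiteAbove_eq_sum_card_bipartiteBelow
    (s := ({w : V | w ∈ W} : Finset V)) (t := ({v : V | v ∉ perp Q W} : Finset V))
    (fun w v => Q (v + w) = 0)
  rw [sum_congr rfl (g := fun _ => #{v : V | v ∉ perp Q W ∧ Q v = 0}), sum_const,
    smul_eq_mul] at key
  · rw [mul_left_comm, key, mul_sum, sum_congr rfl (g := fun _ => #{w : V | w ∈ W}), sum_const,
      smul_eq_mul, mul_comm]
    intro v hv
    rw [← card_polar_fiber (mem_filter.1 hv).2 (-Q v), bipartiteBelow, filter_filter]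
    congr 2
    ext w
    simp only [mem_filter, mem_univ, true_and]
    refine and_congr_right fun hw => ?_
    rw [map_add_polar, hW w hw, add_zero, polar_comm, ← eq_neg_iff_add_eq_zero, eq_comm,
      neg_eq_iff_eq_neg]
  · intro w hw
    have hw : w ∈ perp Q W := hW.le_perp (mem_filter.1 hw).2
    rw [bipartiteAbove, filter_filter]
    refine card_bij' (fun v _ => v + w) (fun v _ => v - w) ?_ ?_ ?_ ?_
    · intro v hv
      simp only [mem_filter, mem_univ, true_and] at hv ⊢
      exact ⟨fun h => hv.1 (by simpa using (perp Q W).sub_mem h hw), hv.2⟩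
    · intro v hv
      simp only [mem_filter, mem_univ, true_and] at hv ⊢
      exact ⟨fun h => hv.1 (by simpa using (perp Q W).add_mem h hw), by simpa using hv.2⟩
    · simp
    · simp

lemma card_mem (W : Submodule K V) :
    #{w : V | w ∈ W} = Fintype.card K ^ Module.finrank K W := by
  rw [← Module.card_eq_pow_finrank (K := K) (V := W), Fintype.card_subtype]

lemma card_mem_perp (hQ : (polarBilin Q).Nondegenerate) (W : Submodule K V) :
    #{v : V | v ∈ perp Q W} = Fintype.card K ^ (Module.finrank K V - Module.finrank K W) := by
  rw [card_mem, perp, LinearMap.BilinForm.finrank_orthogonal hQ]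

/-- The number of singular vectors in `W^⊥` is determined by the dimension of `W`. -/
lemma card_singular_perp (hQ : (polarBilin Q).Nondegenerate) {W : Submodule K V}
    (hW : TotSing Q W) :
    Fintype.card K * #{v : V | v ∈ perp Q W ∧ Q v = 0} + Fintype.card K ^ Module.finrank K V =
      Fintype.card K * #{v : V | Q v = 0} +
        Fintype.card K ^ (Module.finrank K V - Module.finrank K W) := by
  have h1 := card_singular_not_mem_perp hW
  have h2 := card_filter_add_card_filter_not (s := (univ : Finset V)) (fun v => v ∈ perp Q W)
  have h3 := card_filter_add_card_filter_not (s := ({v : V | Q v = 0} : Finset V))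
    (fun v => v ∈ perp Q W)
  simp only [filter_filter, and_comm (a := Q _ = 0)] at h3
  rw [card_mem_perp hQ, card_univ, Module.card_eq_pow_finrank (K := K) (V := V)] at h2
  rw [← h2, ← h3, ← h1]
  ring

/-- Counting the singular vectors of `W^⊥ ∖ W`. -/
lemma card_extend {W : Submodule K V} (hW : TotSing Q W) :
    #{v : V | (v ∈ perp Q W ∧ Q v = 0) ∧ v ∉ W} + Fintype.card K ^ Module.finrank K W =
      #{v : V | v ∈ perp Q W ∧ Q v = 0} := by
  have h := card_filter_add_card_filter_not
    (s := ({v : V | v ∈ perp Q W ∧ Q v = 0} : Finset V)) (fun v => v ∈ W)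
  simp only [filter_filter] at h
  rw [← h, ← card_mem, add_comm]
  congr 2
  ext v
  simp only [mem_filter, mem_univ, true_and]
  exact ⟨fun hv => ⟨⟨hW.le_perp hv, hW v hv⟩, hv⟩, fun hv => hv.2⟩

instance : Fintype (Submodule K V) := Fintype.ofFinite _

variable (Q) in
/-- The totally singular subspaces of vector dimension `j` containing `W`. -/
def above (j : ℕ) (W : Submodule K V) : Finset (Submodule K V) :=
  {U | (W ≤ U ∧ TotSing Q U) ∧ Module.finrank K U = j}

lemma mem_above {j : ℕ} {W U : Submodule K V} :
    U ∈ above Q j W ↔ (W ≤ U ∧ TotSing Q U) ∧ Module.finrank K U = j := by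
  simp [above]

/-- Double counting of the pairs `(v, U)` with `U` totally singular of dimension `j` containing `W`
and `v ∈ U ∖ W`. -/
lemma sum_above (W : Submodule K V) (j : ℕ) :
    ∑ v : V with (v ∈ perp Q W ∧ Q v = 0) ∧ v ∉ W, #(above Q j (W ⊔ K ∙ v)) =
      #(above Q j W) * (Fintype.card K ^ j - Fintype.card K ^ Module.finrank K W) := by
  have key := sum_card_bipartiteAbove_eq_sum_card_bipartiteBelow
    (s := ({v : V | (v ∈ perp Q W ∧ Q v = 0) ∧ v ∉ W} : Finset V)) (t := above Q j W)
    (fun v U => v ∈ U)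
  rw [sum_congr rfl, key, sum_congr rfl, sum_const, smul_eq_mul]
  · intro U hU
    obtain ⟨⟨hWU, hU⟩, hj⟩ := mem_above.1 hU
    have h := card_filter_add_card_filter_not
      (s := ({v : V | v ∈ U} : Finset V)) (fun v => v ∈ W)
    rw [card_mem, hj, filter_filter, filter_filter] at h
    have h' : #{v : V | v ∈ U ∧ v ∈ W} = Fintype.card K ^ Module.finrank K W := by
      rw [← card_mem]
      congr 1
      ext v
      simpa using fun hv => hWU hv
    rw [bipartiteBelow, filter_filter, ← h, h', Nat.add_sub_cancel_left]
    congr 1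
    ext v
    simp only [mem_filter, mem_univ, true_and]
    constructor
    · exact fun h => ⟨h.2, h.1.2⟩
    · refine fun h => ⟨⟨⟨?_, hU v h.1⟩, h.2⟩, h.1⟩
      exact mem_perp.2 fun w hw => mem_perp.1 (hU.le_perp h.1) w (hWU hw)
  · intro v hv
    congr 1
    ext U
    simp only [mem_above, bipartiteAbove, mem_filter, sup_le_iff, 
      Submodule.span_singleton_le_iff_mem]
    tauto

lemma finrank_sup_span {W : Submodule K V} {v : V} (hv : v ∉ W) :
    Module.finrank K ↥(W ⊔ K ∙ v) = Module.finrank K W + 1 := by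
  have h0 : v ≠ 0 := fun h => hv (h ▸ W.zero_mem)
  have h := Submodule.finrank_sup_add_finrank_inf_eq W (K ∙ v)
  have h2 : W ⊓ K ∙ v = ⊥ := by
    rw [← disjoint_iff, Submodule.disjoint_span_singleton' h0]
    exact hv
  rw [h2, finrank_bot, finrank_span_singleton h0] at h
  simpa using h

/-- The number of totally singular `j`-dimensional subspaces through a totally singular subspace
depends only on the dimension of the latter. -/
lemma exists_card_above (hQ : (polarBilin Q).Nondegenerate) (j d : ℕ) :
    ∃ e : ℕ, ∀ W : Submodule K V, TotSing Q W → Module.finrank K W + d = j →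
      #(above Q j W) = e := by
  have hq : 1 < Fintype.card K := Fintype.one_lt_card
  induction d with
  | zero =>
    refine ⟨1, fun W hW hj => card_eq_one.2 ⟨W, ?_⟩⟩
    ext U
    rw [mem_above, mem_singleton]
    constructor
    · rintro ⟨⟨h, -⟩, h2⟩
      exact (Submodule.eq_of_le_of_finrank_eq h (by omega)).symm
    · rintro rfl
      exact ⟨⟨le_rfl, hW⟩, by omega⟩
  | succ d ih =>
    obtain ⟨e, he⟩ := ih
    by_cases hex : ∃ W : Submodule K V, TotSing Q W ∧ Module.finrank K W + (d + 1) = j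
    · obtain ⟨W₀, hW₀, hj₀⟩ := hex
      refine ⟨#(above Q j W₀), fun W hW hj => ?_⟩
      have key : ∀ W : Submodule K V, TotSing Q W → Module.finrank K W + (d + 1) = j →
          #(above Q j W) * (Fintype.card K ^ j - Fintype.card K ^ Module.finrank K W) =
            #{v : V | (v ∈ perp Q W ∧ Q v = 0) ∧ v ∉ W} * e := by
        intro W hW hj
        rw [← sum_above W, sum_congr rfl (g := fun _ => e), sum_const, smul_eq_mul]
        intro v hv
        simp only [mem_filter, mem_univ, true_and] at hv
        exact he _ (hW.sup_span hv.1.1 hv.1.2) (by rw [finrank_sup_span hv.2]; omega)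
      have hdim : Module.finrank K W = Module.finrank K W₀ := by omega
      have h1 := card_singular_perp hQ hW
      have h2 := card_singular_perp hQ hW₀
      have h3 := card_extend hW
      have h4 := card_extend hW₀
      rw [hdim] at h1 h3
      have h5 : #{v : V | v ∈ perp Q W ∧ Q v = 0} = #{v : V | v ∈ perp Q W₀ ∧ Q v = 0} :=
        Nat.eq_of_mul_eq_mul_left (by omega : 0 < Fintype.card K) (by omega)
      have h6 : #{v : V | (v ∈ perp Q W ∧ Q v = 0) ∧ v ∉ W} =
          #{v : V | (v ∈ perp Q W₀ ∧ Q v = 0) ∧ v ∉ W₀} := by omega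
      have hlt : Fintype.card K ^ Module.finrank K W₀ < Fintype.card K ^ j :=
        Nat.pow_lt_pow_right hq (by omega)
      apply Nat.eq_of_mul_eq_mul_right (Nat.sub_pos_of_lt hlt)
      rw [key W₀ hW₀ hj₀, ← h6, ← key W hW hj, hdim]
    · exact ⟨0, fun W hW hj => (hex ⟨W, hW, hj⟩).elim⟩

lemma exists_le_finrank_eq (U : Submodule K V) (m : ℕ) (hm : m ≤ Module.finrank K U) :
    ∃ W ≤ U, Module.finrank K W = m := by
  induction m with
  | zero => exact ⟨⊥, bot_le, finrank_bot K V⟩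
  | succ m ih =>
    obtain ⟨W, hWU, hW⟩ := ih (by omega)
    obtain ⟨v, hvU, hvW⟩ := SetLike.exists_of_lt (lt_of_le_of_ne hWU (by rintro rfl; omega))
    exact ⟨W ⊔ K ∙ v, sup_le hWU (by simpa using hvU), by rw [finrank_sup_span hvW, hW]⟩

/-- In a hyperbolic space of dimension `2n+2`, the counts `M` and `N` of totally singular
`(k+1)`-dimensional subspaces through a point and through a line satisfy
`M (q^k - 1) = N (q^n - 1) (q^(n-1) + 1)`, with `N` positive. -/
lemma card_above_point (hQ : (polarBilin Q).Nondegenerate) {n k : ℕ} (hn : 1 ≤ n) (hk : 1 ≤ k)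
    (hkn : k ≤ n) (hV : Module.finrank K V = 2 * n + 2) {U : Submodule K V} (hU : TotSing Q U)
    (hUn : Module.finrank K U = n + 1) :
    ∃ N : ℕ, 0 < N ∧
      (∀ L : Submodule K V, TotSing Q L → Module.finrank K L = 2 → #(above Q (k + 1) L) = N) ∧
      ∀ P : Submodule K V, TotSing Q P → Module.finrank K P = 1 →
        (#(above Q (k + 1) P) : ℝ) * ((Fintype.card K : ℝ) ^ k - 1) =
          N * (((Fintype.card K : ℝ) ^ n - 1) * ((Fintype.card K : ℝ) ^ (n - 1) + 1)) := by
  obtain ⟨N, hN⟩ := exists_card_above hQ (k + 1) (k - 1)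
  replace hN : ∀ L : Submodule K V, TotSing Q L → Module.finrank K L = 2 →
      #(above Q (k + 1) L) = N := fun L hL h2 => hN L hL (by omega)
  refine ⟨N, ?_, hN, ?_⟩
  · obtain ⟨W, hWU, hW⟩ := exists_le_finrank_eq U (k + 1) (by omega)
    obtain ⟨L, hLW, hL⟩ := exists_le_finrank_eq W 2 (by omega)
    have hWs : TotSing Q W := fun v hv => hU v (hWU hv)
    rw [← hN L (fun v hv => hWs v (hLW hv)) hL]
    exact card_pos.2 ⟨W, mem_above.2 ⟨⟨hLW, hWs⟩, hW⟩⟩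
  · intro P hP hP1
    have hq : 1 < Fintype.card K := Fintype.one_lt_card
    -- `U^⊥ = U`, so the count for `U` yields the total number of singular vectors.
    have hUperp : perp Q U = U := by
      refine (Submodule.eq_of_le_of_finrank_eq hU.le_perp ?_).symm
      rw [perp, LinearMap.BilinForm.finrank_orthogonal hQ]
      omega
    have hU1 := card_singular_perp hQ hU
    have hU2 : #{v : V | v ∈ perp Q U ∧ Q v = 0} = Fintype.card K ^ (n + 1) := by
      rw [← hUn, ← card_mem]
      congr 1
      ext v
      simpa [hUperp] using hU v
    have hP1' := card_singular_perp hQ hP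
    have hP2 := card_extend hP
    have hP3 := sum_above P (Q := Q) (k + 1)
    rw [sum_congr rfl (g := fun _ => N), sum_const, smul_eq_mul] at hP3
    · obtain ⟨n, rfl⟩ : ∃ m, n = m + 1 := ⟨n - 1, by omega⟩
      rw [hP1] at hP1' hP2 hP3
      rw [hU2, hUn, hV] at hU1
      rw [hV] at hP1'
      rw [← hP2] at hP1'
      rw [show 2 * (n + 1) + 2 - (n + 1 + 1) = n + 2 by omega] at hU1
      rw [show 2 * (n + 1) + 2 - 1 = 2 * n + 3 by omega] at hP1'
      rw [Nat.add_sub_cancel]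
      have hle : Fintype.card K ^ 1 ≤ Fintype.card K ^ (k + 1) :=
        Nat.pow_le_pow_right (by omega) (by omega)
      generalize #{v : V | (v ∈ perp Q P ∧ Q v = 0) ∧ v ∉ P} = s at *
      generalize #{v : V | Q v = 0} = z at *
      generalize #(above Q (k + 1) P) = M at *
      have hq0 : (Fintype.card K : ℝ) ≠ 0 := by positivity
      generalize Fintype.card K = q at *
      have hP3' : (s : ℝ) * N = M * ((q : ℝ) ^ (k + 1) - (q : ℝ) ^ 1) := by
        have := congrArg (Nat.cast (R := ℝ)) hP3
        push_cast [Nat.cast_sub hle] at this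
        exact this
      have e1 : (q : ℝ) * (s + q ^ 1) + q ^ (2 * (n + 1) + 2) = q * z + q ^ (2 * n + 3) := by
        exact_mod_cast hP1'
      have e2 : (q : ℝ) * q ^ (n + 1 + 1) + q ^ (2 * (n + 1) + 2) = q * z + q ^ (n + 2) := by
        exact_mod_cast hU1
      have hs : (s : ℝ) = q * ((q ^ (n + 1) - 1) * (q ^ n + 1)) := by
        apply mul_left_cancel₀ hq0
        linear_combination e1 - e2
      apply mul_left_cancel₀ hq0
      rw [hs] at hP3'
      linear_combination -hP3'
    · intro v hv
      simp only [mem_filter, mem_univ, true_and] at hv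
      exact hN _ (hP.sup_span hv.1.1 hv.1.2) (by rw [finrank_sup_span hv.2, hP1])

end Counting

/-! ### The standard hyperbolic form -/

section Hyperbolic

open QuadraticMap

variable (K : Type*) [Field K]

/-- `QhypForm` as a bundled quadratic form. -/
def hypQF (n : ℕ) : QuadraticForm K (Fin (2 * n + 2) → K) :=
  ∑ i : Fin (n + 1), linMulLin
    (LinearMap.proj (⟨2 * i.1, by have := i.2; omega⟩ : Fin (2 * n + 2)))
    (LinearMap.proj (⟨2 * i.1 + 1, by have := i.2; omega⟩ : Fin (2 * n + 2)))

variable {K}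

lemma hypQF_apply (n : ℕ) (v : Fin (2 * n + 2) → K) : hypQF K n v =
    ∑ i : Fin (n + 1),
      v ⟨2 * i.1, by have := i.2; omega⟩ * v ⟨2 * i.1 + 1, by have := i.2; omega⟩ := by
  simp [hypQF, sum_apply]

lemma polar_hypQF (n : ℕ) (v w : Fin (2 * n + 2) → K) : polar (hypQF K n) v w =
    ∑ i : Fin (n + 1),
      (v ⟨2 * i.1, by have := i.2; omega⟩ * w ⟨2 * i.1 + 1, by have := i.2; omega⟩ +
        w ⟨2 * i.1, by have := i.2; omega⟩ * v ⟨2 * i.1 + 1, by have := i.2; omega⟩) := by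
  simp only [polar, hypQF_apply, ← Finset.sum_sub_distrib, Pi.add_apply]
  exact Finset.sum_congr rfl fun i _ => by ring

lemma hypQF_separating (n : ℕ) (v : Fin (2 * n + 2) → K)
    (hv : ∀ w, polar (hypQF K n) v w = 0) : v = 0 := by
  ext j
  obtain ⟨j, hj⟩ := j
  obtain ⟨i, rfl | rfl⟩ := Nat.even_or_odd' j
  · have h := hv (Pi.single ⟨2 * i + 1, by omega⟩ 1)
    rw [polar_hypQF, Finset.sum_eq_single ⟨i, by omega⟩] at h
    · simpa [Pi.single_apply] using h
    · intro b _ hb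
      have hb' : b.1 ≠ i := fun h => hb (Fin.ext h)
      have : 2 * b.1 ≠ 2 * i + 1 := by omega
      simp [hb', this]
    · simp
  · have h := hv (Pi.single ⟨2 * i, by omega⟩ 1)
    rw [polar_hypQF, Finset.sum_eq_single ⟨i, by omega⟩] at h
    · simpa [Pi.single_apply] using h
    · intro b _ hb
      have hb' : b.1 ≠ i := fun h => hb (Fin.ext h)
      have : 2 * b.1 + 1 ≠ 2 * i := by omega
      simp [hb', this]
    · simp

lemma hypQF_nondegenerate (n : ℕ) : (polarBilin (hypQF K n)).Nondegenerate :=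
  ⟨fun v hv => hypQF_separating n v hv,
    fun v hv => hypQF_separating n v fun w => by rw [polar_comm]; exact hv w⟩

/-- The subspace of vectors whose odd-indexed coordinates vanish is totally singular of dimension
`n + 1`. -/
lemma exists_generator (n : ℕ) : ∃ U : Submodule K (Fin (2 * n + 2) → K),
    TotSing (hypQF K n) U ∧ Module.finrank K U = n + 1 := by
  let f : (Fin (n + 1) → K) →ₗ[K] (Fin (2 * n + 2) → K) :=
    { toFun := fun y j => if j.1 % 2 = 0 then y ⟨j.1 / 2, by omega⟩ else 0
      map_add' := fun x y => by ext j; by_cases h : j.1 % 2 = 0 <;> simp [h]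
      map_smul' := fun a y => by ext j; by_cases h : j.1 % 2 = 0 <;> simp [h] }
  have hf : Function.Injective f := by
    intro x y h
    ext i
    simpa [f] using congrFun h ⟨2 * i.1, by omega⟩
  refine ⟨LinearMap.range f, ?_, by rw [LinearMap.finrank_range_of_inj hf]; simp⟩
  rintro _ ⟨y, rfl⟩
  rw [hypQF_apply]
  refine Finset.sum_eq_zero fun i _ => ?_
  simp [f]

end Hyperbolic

/-! ### The weight of dual codewords -/

lemma totSing_hypQF_iff (n : ℕ) (W : Submodule F (Fin (2 * n + 2) → F)) :
    TotSing (hypQF F n) W ↔ ∀ v ∈ W, QhypForm F n v = 0 := by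
  simp only [TotSing, hypQF_apply, QhypForm]

/-- A `k`-space through a support point of a dual codeword contains a second support point. -/
lemma exists_second_support_point {p n k : ℕ} {c : QhypPoint F n → ZMod p}
    (hc : ∀ K : QhypSub F n k, ∑ᶠ P ∈ {P : QhypPoint F n | P.1 ≤ K.1}, c P = 0)
    {P₀ : QhypPoint F n} (hP₀ : c P₀ ≠ 0) (K : QhypSub F n k) (hK : P₀.1 ≤ K.1) :
    ∃ P : QhypPoint F n, P ≠ P₀ ∧ c P ≠ 0 ∧ P.1 ≤ K.1 := by
  by_contra! hcon
  apply hP₀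
  rw [← hc K, finsum_eq_single _ P₀]
  · rw [finsum_eq_if, if_pos (show P₀ ∈ {P : QhypPoint F n | P.1 ≤ K.1} from hK)]
  · intro P hP
    rw [finsum_eq_if]
    split_ifs with h
    · by_contra h0
      exact hcon P hP h0 h
    · rfl

/-- Through two distinct points there pass at most as many totally singular subspaces as through
a totally singular line: none at all when the points are not collinear on the quadric. -/
lemma card_above_two_points_le {n k N : ℕ}
    (hN : ∀ L : Submodule F (Fin (2 * n + 2) → F), TotSing (hypQF F n) L →
      Module.finrank F L = 2 → (above (hypQF F n) (k + 1) L).card = N)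
    {P₀ P : QhypPoint F n} (hne : P ≠ P₀) :
    (above (hypQF F n) (k + 1) (P₀.1 ⊔ P.1)).card ≤ N := by
  obtain h | ⟨U, hU⟩ := (above (hypQF F n) (k + 1) (P₀.1 ⊔ P.1)).eq_empty_or_nonempty
  · simp [h]
  · obtain ⟨⟨hle, hU⟩, -⟩ := mem_above.1 hU
    refine (hN _ (fun v hv => hU v (hle hv)) ?_).le
    obtain ⟨v, hv, hv0⟩ := P.1.ne_bot_iff.1 (by
      intro h
      have := P.2.1
      rw [h, finrank_bot] at this
      omega)
    have hspan : F ∙ v = P.1 := by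
      refine Submodule.eq_of_le_of_finrank_eq (by simpa using hv) ?_
      rw [finrank_span_singleton hv0, P.2.1]
    have hv' : v ∉ P₀.1 := by
      intro hmem
      refine hne (Subtype.ext (Submodule.eq_of_le_of_finrank_eq ?_ ?_))
      · rw [← hspan]
        simpa using hmem
      · rw [P.2.1, P₀.2.1]
    rw [← hspan, finrank_sup_span hv', P₀.2.1]

/-- Every nonzero codeword of the dual of the `p`-ary code of points and `k`-spaces of
`Q⁺(2n+1,q)`, `q = p^h`, has weight at least `1 + (qⁿ-1)(qⁿ⁻¹+1)/(qᵏ-1)`; i.e. this is a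
lower bound for the minimum weight of the dual code. -/
theorem dual_code_Qhyp_min_weight_lower_bound (p n k q : ℕ) (hp : p.Prime) [CharP F p]
    (hq : Fintype.card F = q) (hn : 1 ≤ n) (hk : 1 ≤ k) (hkn : k ≤ n)
    (c : QhypPoint F n → ZMod p) (hc0 : c ≠ 0)
    (hc : ∀ K : QhypSub F n k, ∑ᶠ P ∈ {P : QhypPoint F n | P.1 ≤ K.1}, c P = 0) :
    (1 : ℝ) + ((q : ℝ) ^ n - 1) * ((q : ℝ) ^ (n - 1) + 1) / ((q : ℝ) ^ k - 1) ≤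
      (Set.ncard {P : QhypPoint F n | c P ≠ 0} : ℝ) := by
  have : Finite (QhypPoint F n) := Subtype.finite
  have : Fintype (QhypPoint F n) := Fintype.ofFinite _
  obtain ⟨P₀, hP₀⟩ := Function.ne_iff.1 hc0
  obtain ⟨U, hU, hUn⟩ := exists_generator (K := F) n
  obtain ⟨N, hNpos, hN, hM⟩ :=
    card_above_point (hypQF_nondegenerate (K := F) n) hn hk hkn (by simp) hU hUn
  specialize hM P₀.1 ((totSing_hypQF_iff F n _).2 P₀.2.2) P₀.2.1
  rw [hq] at hM
  have hq1 : 1 < q := hq ▸ Fintype.one_lt_card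
  set S : Finset (QhypPoint F n) := {P | c P ≠ 0} with hS
  have hcard : Set.ncard {P : QhypPoint F n | c P ≠ 0} = S.card := by
    rw [← Set.ncard_coe_finset]
    simp [hS]
  have hP₀S : P₀ ∈ S := by simpa [hS] using hP₀
  -- Every totally singular `(k+1)`-space through `P₀` meets the support in a further point.
  have hcover : above (hypQF F n) (k + 1) P₀.1 ⊆
      (S.erase P₀).biUnion fun P => above (hypQF F n) (k + 1) (P₀.1 ⊔ P.1) := by
    intro K hK
    obtain ⟨⟨hle, hKs⟩, hdim⟩ := mem_above.1 hK
    obtain ⟨P, hne, hcP, hPK⟩ := exists_second_support_point F hc hP₀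
      ⟨K, hdim, (totSing_hypQF_iff F n _).1 hKs⟩ hle
    refine Finset.mem_biUnion.2 ⟨P, by simp [hS, hne, hcP], ?_⟩
    exact mem_above.2 ⟨⟨sup_le hle hPK, hKs⟩, hdim⟩
  have hle : (above (hypQF F n) (k + 1) P₀.1).card ≤ (S.card - 1) * N := by
    refine (Finset.card_le_card hcover).trans ?_
    rw [← Finset.card_erase_of_mem hP₀S]
    refine Finset.card_biUnion_le_card_mul _ _ _ fun P hP => ?_
    exact card_above_two_points_le F hN (Finset.ne_of_mem_erase hP)
  have hS1 : 1 ≤ S.card := Finset.card_pos.2 ⟨P₀, hP₀S⟩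
  have hle' : ((above (hypQF F n) (k + 1) P₀.1).card : ℝ) ≤ ((S.card : ℝ) - 1) * N := by
    have := Nat.cast_le (α := ℝ).2 hle
    push_cast [Nat.cast_sub hS1] at this
    exact this
  have hqk : (0 : ℝ) < (q : ℝ) ^ k - 1 :=
    sub_pos.2 (one_lt_pow₀ (by exact_mod_cast hq1) (by omega))
  have hN0 : (0 : ℝ) < N := by exact_mod_cast hNpos
  rw [hcard, ← le_sub_iff_add_le', div_le_iff₀ hqk]
  refine le_of_mul_le_mul_left ?_ hN0
  rw [← hM]
  calc _ ≤ ((S.card : ℝ) - 1) * N * ((q : ℝ) ^ k - 1) := by gcongr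
    _ = _ := by ring
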